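/- arXiv:2104.11266 — 2 statements merged into one kernel-verified Lean document; each statement's English description precedes it below -/
import Mathlib

section
/- Let N ≥ 1 be an integer, let φ : ℝ^N → ℝ be a smooth compactly supported function, let R > 0, and set φ_R(x) := φ(x/R). Then for every Schwartz function f : ℝ^N → ℂ, | ∫_{ℝ^N} |∇(φ_R f)(x)|² dx − ∫_{ℝ^N} φ_R(x)² |∇f(x)|² dx | ≤ (C_φ / R²) ∫_{ℝ^N} |f(x)|² dx, where C_φ := sup_{x ∈ ℝ^N} |φ(x) (Δφ)(x)|. -/
/-!
Put `ψ(x) = φ(x/R)`. Expanding the product rule gives, pointwise and for each coordinate,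
`|∂ᵢ(ψf)|² = ψ²|∂ᵢf|² + ∂ᵢ(ψ ∂ᵢψ |f|²) - ψ ∂ᵢ²ψ |f|²`. The middle term is the derivative of a
compactly supported smooth function, so its integral vanishes, and the difference of the two
integrals equals `-∫ ψ Δψ |f|²` (`integral_grad_mul_sub`). Since `(ψ Δψ)(x) = R⁻² (φ Δφ)(x/R)`,
this is at most `R⁻² sup |φ Δφ| ∫ |f|²` in absolute value.
-/

open MeasureTheory
open scoped BigOperators

/-- Localization formula: `|∂ᵢ(ψf)|² - ψ²|∂ᵢf|² = ∂ᵢ(ψ ∂ᵢψ |f|²) - ψ ∂ᵢ²ψ |f|²` pointwise, and the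
divergence term integrates to zero because it is compactly supported. -/
lemma integral_grad_mul_sub {N : ℕ}
    {ψ : EuclideanSpace ℝ (Fin N) → ℝ} {f : EuclideanSpace ℝ (Fin N) → ℂ}
    (hψ : ContDiff ℝ (⊤ : ℕ∞) ψ) (hψc : HasCompactSupport ψ) (hf : ContDiff ℝ (⊤ : ℕ∞) f) :
    (∫ x, ∑ i : Fin N,
        ‖fderiv ℝ (fun y => (ψ y : ℂ) * f y) x (EuclideanSpace.single i 1)‖ ^ 2)
      - ∫ x, (ψ x) ^ 2 * ∑ i : Fin N, ‖fderiv ℝ f x (EuclideanSpace.single i 1)‖ ^ 2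
    = -∫ x, (ψ x * ∑ i : Fin N,
        fderiv ℝ (fun y => fderiv ℝ ψ y (EuclideanSpace.single i 1)) x
          (EuclideanSpace.single i 1)) * ‖f x‖ ^ 2 := by
  have hd : ∀ {F : Type} [NormedAddCommGroup F] [NormedSpace ℝ F]
      {g : EuclideanSpace ℝ (Fin N) → F} (_ : ContDiff ℝ (⊤ : ℕ∞) g)
      (v : EuclideanSpace ℝ (Fin N)), ContDiff ℝ (⊤ : ℕ∞) (fun y => fderiv ℝ g y v) := by
    intro F _ _ g hg v
    exact (hg.fderiv_right (m := (⊤ : ℕ∞)) (by simp)).clm_apply contDiff_const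
  have hn : ContDiff ℝ (⊤ : ℕ∞) (fun y => ‖f y‖ ^ 2) := hf.norm_sq ℝ
  let e : Fin N → EuclideanSpace ℝ (Fin N) := fun i => EuclideanSpace.single i 1
  let w : Fin N → EuclideanSpace ℝ (Fin N) → ℝ :=
    fun i y => (ψ y * fderiv ℝ ψ y (e i)) * ‖f y‖ ^ 2
  have hw : ∀ i, ContDiff ℝ (⊤ : ℕ∞) (w i) := fun i => (hψ.mul (hd hψ _)).mul hn
  have hwc : ∀ i, HasCompactSupport (w i) := fun i => hψc.mul_right.mul_right
  have hwi : ∀ i, Integrable (fun x => fderiv ℝ (w i) x (e i)) := fun i =>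
    (hd (hw i) _).continuous.integrable_of_hasCompactSupport ((hwc i).fderiv_apply ℝ _)
  have hw0 : ∀ i, ∫ x, fderiv ℝ (w i) x (e i) = 0 := by
    intro i
    have h := integral_mul_fderiv_eq_neg_fderiv_mul_of_integrable (𝕜 := ℝ) (μ := volume)
      (f := fun _ : EuclideanSpace ℝ (Fin N) => (1 : ℝ)) (g := w i) (v := e i)
      (by simp) (by simpa using hwi i)
      (by simpa using (hw i).continuous.integrable_of_hasCompactSupport (hwc i))
      (by fun_prop) (fun y _ => (hw i).differentiable (by simp) y)
    simpa using h
  have key : ∀ i x, ‖fderiv ℝ (fun y => (ψ y : ℂ) * f y) x (e i)‖ ^ 2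
      = fderiv ℝ (w i) x (e i) + (ψ x) ^ 2 * ‖fderiv ℝ f x (e i)‖ ^ 2
        - ψ x * fderiv ℝ (fun y => fderiv ℝ ψ y (e i)) x (e i) * ‖f x‖ ^ 2 := by
    intro i x
    have h1 : HasFDerivAt ψ (fderiv ℝ ψ x) x := (hψ.differentiable (by simp) x).hasFDerivAt
    have h1' : HasFDerivAt (fun y => (ψ y : ℂ)) (Complex.ofRealCLM.comp (fderiv ℝ ψ x)) x :=
      Complex.ofRealCLM.hasFDerivAt.comp x h1
    have h2 : HasFDerivAt f (fderiv ℝ f x) x := (hf.differentiable (by simp) x).hasFDerivAt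
    have h3 := ((hd hψ (e i)).differentiable (by simp) x).hasFDerivAt
    have hwx : fderiv ℝ (w i) x = _ := ((h1.mul h3).mul h2.norm_sq).fderiv
    have hmx : fderiv ℝ (fun y => (ψ y : ℂ) * f y) x = _ := (h1'.mul h2).fderiv
    rw [hmx, hwx]
    simp [Complex.sq_norm, Complex.normSq_apply, Complex.inner]
    ring
  have hcont : ∀ g : EuclideanSpace ℝ (Fin N) → ℝ, Continuous g → Integrable (fun x => ψ x * g x) :=
    fun g hg => (hψ.continuous.mul hg).integrable_of_hasCompactSupport hψc.mul_right
  have hB : Integrable (fun x => (ψ x) ^ 2 * ∑ i, ‖fderiv ℝ f x (e i)‖ ^ 2) := by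
    have := hcont (fun x => ψ x * ∑ i, ‖fderiv ℝ f x (e i)‖ ^ 2)
      (hψ.continuous.mul (continuous_finsetSum _ fun i _ => (hd hf (e i)).continuous.norm.pow 2))
    simpa only [pow_two, mul_assoc] using this
  have hC : Integrable (fun x => (ψ x * ∑ i,
      fderiv ℝ (fun y => fderiv ℝ ψ y (e i)) x (e i)) * ‖f x‖ ^ 2) := by
    have := hcont (fun x => (∑ i, fderiv ℝ (fun y => fderiv ℝ ψ y (e i)) x (e i)) * ‖f x‖ ^ 2)
      ((continuous_finsetSum _ fun i _ => (hd (hd hψ (e i)) (e i)).continuous).mul hn.continuous)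
    simpa only [mul_assoc] using this
  have hA : ∀ x, ∑ i, ‖fderiv ℝ (fun y => (ψ y : ℂ) * f y) x (e i)‖ ^ 2
      = (∑ i, fderiv ℝ (w i) x (e i) + (ψ x) ^ 2 * ∑ i, ‖fderiv ℝ f x (e i)‖ ^ 2)
        - (ψ x * ∑ i, fderiv ℝ (fun y => fderiv ℝ ψ y (e i)) x (e i)) * ‖f x‖ ^ 2 := by
    intro x
    simp only [key, Finset.sum_sub_distrib, Finset.sum_add_distrib, Finset.mul_sum,
      Finset.sum_mul]
  have hS : Integrable (fun x => ∑ i, fderiv ℝ (w i) x (e i)) :=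
    integrable_finsetSum _ fun i _ => hwi i
  change (∫ x, ∑ i, ‖fderiv ℝ (fun y => (ψ y : ℂ) * f y) x (e i)‖ ^ 2) - _ = _
  simp only [hA]
  rw [integral_sub (by exact hS.add hB) hC, integral_add hS hB, integral_finsetSum _ fun i _ => hwi i]
  simp [hw0, e]

/-- `|∫ |∇(φ_R f)|² − ∫ φ_R² |∇f|²| ≤ (C_φ / R²) ∫ |f|²` with
`C_φ = sup_x |φ(x) Δφ(x)|` and `φ_R(x) = φ(x/R)`. -/
theorem stmt1 (N : ℕ) (hN : 1 ≤ N)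
    (φ : EuclideanSpace ℝ (Fin N) → ℝ)
    (hφ : ContDiff ℝ (⊤ : ℕ∞) φ) (hφc : HasCompactSupport φ)
    (R : ℝ) (hR : 0 < R)
    (f : SchwartzMap (EuclideanSpace ℝ (Fin N)) ℂ) :
    |(∫ x, ∑ i : Fin N,
        ‖fderiv ℝ (fun y => (φ (R⁻¹ • y) : ℂ) * f y) x (EuclideanSpace.single i 1)‖ ^ 2)
      - ∫ x, (φ (R⁻¹ • x)) ^ 2 *
          ∑ i : Fin N, ‖fderiv ℝ (⇑f) x (EuclideanSpace.single i 1)‖ ^ 2|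
    ≤ ((⨆ x : EuclideanSpace ℝ (Fin N),
          |φ x * ∑ i : Fin N,
            fderiv ℝ (fun y => fderiv ℝ φ y (EuclideanSpace.single i 1)) x
              (EuclideanSpace.single i 1)|) / R ^ 2)
      * ∫ x, ‖f x‖ ^ 2 := by
  set S := ⨆ x : EuclideanSpace ℝ (Fin N), |φ x * ∑ i : Fin N,
    fderiv ℝ (fun y => fderiv ℝ φ y (EuclideanSpace.single i 1)) x
      (EuclideanSpace.single i 1)| with hS
  have hd : ∀ {g : EuclideanSpace ℝ (Fin N) → ℝ} (_ : ContDiff ℝ (⊤ : ℕ∞) g)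
      (v : EuclideanSpace ℝ (Fin N)), ContDiff ℝ (⊤ : ℕ∞) (fun y => fderiv ℝ g y v) := by
    intro g hg v
    exact (hg.fderiv_right (m := (⊤ : ℕ∞)) (by simp)).clm_apply contDiff_const
  have hbdd : BddAbove (Set.range fun x : EuclideanSpace ℝ (Fin N) => |φ x * ∑ i : Fin N,
      fderiv ℝ (fun y => fderiv ℝ φ y (EuclideanSpace.single i 1)) x
        (EuclideanSpace.single i 1)|) := by
    apply Continuous.bddAbove_range_of_hasCompactSupport
    · exact (hφ.continuous.mul
        (continuous_finsetSum _ fun i _ => (hd (hd hφ _) _).continuous)).abs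
    · exact (hφc.mul_right).comp_left (g := fun t : ℝ => |t|) abs_zero
  have hψ : ContDiff ℝ (⊤ : ℕ∞) (fun x => φ (R⁻¹ • x)) :=
    hφ.comp (contDiff_id.const_smul R⁻¹)
  have hψc : HasCompactSupport (fun x => φ (R⁻¹ • x)) :=
    hφc.comp_smul (inv_ne_zero hR.ne')
  rw [integral_grad_mul_sub hψ hψc (f.smooth _), abs_neg, ← integral_const_mul, ← Real.norm_eq_abs]
  have hfi : Integrable (fun x => ‖f x‖ ^ 2) :=
    (f.memLp 2 volume).integrable_norm_pow (by norm_num)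
  refine norm_integral_le_of_norm_le (hfi.const_mul _) (Filter.Eventually.of_forall fun x => ?_)
  have hscale : ∀ i : Fin N,
      fderiv ℝ (fun y => fderiv ℝ (fun x => φ (R⁻¹ • x)) y (EuclideanSpace.single i 1)) x
        (EuclideanSpace.single i 1) = (R ^ 2)⁻¹ *
      fderiv ℝ (fun y => fderiv ℝ φ y (EuclideanSpace.single i 1)) (R⁻¹ • x)
        (EuclideanSpace.single i 1) := by
    intro i
    have h1 : (fun y => fderiv ℝ (fun x => φ (R⁻¹ • x)) y (EuclideanSpace.single i 1))
        = fun y => R⁻¹ • (fun z => fderiv ℝ φ z (EuclideanSpace.single i 1)) (R⁻¹ • y) := by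
      funext y
      rw [fderiv_comp_smul]; simp
    have h2 : DifferentiableAt ℝ
        (fun y => (fun z => fderiv ℝ φ z (EuclideanSpace.single i 1)) (R⁻¹ • y)) x :=
      ((hd hφ _).comp (contDiff_id.const_smul R⁻¹)).differentiable (by simp) x
    rw [h1, fderiv_fun_const_smul h2,
      fderiv_comp_smul (f := fun z => fderiv ℝ φ z (EuclideanSpace.single i 1))]
    simp
    ring
  have hle := le_ciSup hbdd (R⁻¹ • x)
  simp only [hscale, ← Finset.mul_sum]
  rw [norm_mul, Real.norm_eq_abs, Real.norm_of_nonneg (by positivity : 0 ≤ ‖f x‖ ^ 2),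
    mul_left_comm, abs_mul, abs_of_pos (by positivity : 0 < (R ^ 2)⁻¹), div_eq_inv_mul]
  gcongr
end

section
/- Let N ≥ 3 be an integer, let b > 0, and let p ≥ 1 be a real number with p + 1 ≤ 2N/(N−2). Then there exists a constant C = C(N, b, p) > 0 such that for every R > 0 and every Schwartz function f : ℝ^N → ℂ, ∫_{{x : ‖x‖ > R}} ‖x‖^{−b} |f(x)|^{p+1} dx ≤ C R^{−b} (‖f‖_{L²} + ‖∇f‖_{L²})^{p+1}. -/
open MeasureTheory
open scoped BigOperators

/-! The weight satisfies `‖x‖ ^ (-b) ≤ R ^ (-b)` on `{R < ‖x‖}`, so it suffices to bound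
`∫ ‖f‖ ^ (p + 1)` by a multiple of `A ^ (p + 1)`, where `A = ‖f‖_{L²} + ‖∇f‖_{L²}`; this is the
embedding `H¹ ⊂ L^{p+1}` for `2 ≤ p + 1 ≤ s := 2N/(N-2)`.

At the endpoint `s` (`eLpNorm_le_H1`), the Gagliardo–Nirenberg–Sobolev inequality for compactly
supported `C¹` functions is applied to the truncations `χ(x/(n+1)) f(x)`, with `χ` a smooth bump.
Since the right-hand side contains `‖f‖_{L²}`, the crude bound `‖∇f‖ + K ‖f‖` for their gradients
is enough, and Fatou's lemma passes to the limit. Intermediate exponents (`integral_le_H1`) follow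
from `t ^ q ≤ t ^ 2 + t ^ s` with `t = ‖f x‖ / A`, where dividing by `A` restores homogeneity. -/

/-- Operator norm versus Euclidean norm of the coordinates (Cauchy–Schwarz). -/
lemma opNorm_sq_le_sum {N : ℕ} (L : EuclideanSpace ℝ (Fin N) →L[ℝ] ℂ) :
    ‖L‖ ^ 2 ≤ ∑ i : Fin N, ‖L (EuclideanSpace.single i 1)‖ ^ 2 := by
  set S := ∑ i : Fin N, ‖L (EuclideanSpace.single i 1)‖ ^ 2 with hS
  have hS0 : 0 ≤ S := by positivity
  have h : ‖L‖ ≤ √S := by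
    refine L.opNorm_le_bound (Real.sqrt_nonneg _) fun v => ?_
    have hv : v = ∑ i, v i • EuclideanSpace.single i (1 : ℝ) := by
      ext j
      simp [Finset.sum_apply, Pi.single_apply]
    calc ‖L v‖ = ‖∑ i, v i • L (EuclideanSpace.single i (1 : ℝ))‖ := by
          conv_lhs => rw [hv]
          simp only [map_sum, map_smul]
      _ ≤ ∑ i, ‖L (EuclideanSpace.single i (1 : ℝ))‖ * ‖v i‖ := by
          refine (norm_sum_le _ _).trans (le_of_eq ?_)
          simp only [norm_smul, mul_comm]
      _ ≤ √S * √(∑ i, ‖v i‖ ^ 2) := Real.sum_mul_le_sqrt_mul_sqrt _ _ _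
      _ = √S * ‖v‖ := by rw [EuclideanSpace.norm_eq]
  calc ‖L‖ ^ 2 ≤ (√S) ^ 2 := by gcongr
    _ = S := Real.sq_sqrt hS0

set_option maxHeartbeats 1000000 in
/-- The Sobolev embedding at the critical exponent for Schwartz functions. -/
lemma eLpNorm_le_H1 (N : ℕ) (hN : 3 ≤ N) (s : NNReal)
    (hs : (s : ℝ)⁻¹ = (2 : ℝ)⁻¹ - (N : ℝ)⁻¹) :
    ∃ C : NNReal, ∀ f : SchwartzMap (EuclideanSpace ℝ (Fin N)) ℂ,
      eLpNorm f s volume ≤ C * (eLpNorm f 2 volume + eLpNorm (fderiv ℝ f) 2 volume) := by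
  let χ : ContDiffBump (0 : EuclideanSpace ℝ (Fin N)) := ⟨1, 2, one_pos, one_lt_two⟩
  have hχ : ContDiff ℝ 1 χ := χ.contDiff
  obtain ⟨K, hK⟩ := (hχ.continuous_fderiv one_ne_zero).bounded_above_of_compact_support
    (χ.hasCompactSupport.fderiv (𝕜 := ℝ))
  have hK0 : 0 ≤ K := (norm_nonneg _).trans (hK 0)
  let C₀ : NNReal := SNormLESNormFDerivOfEqConst ℂ
    (volume : Measure (EuclideanSpace ℝ (Fin N))) 2
  refine ⟨C₀ * (1 + K.toNNReal), fun f => ?_⟩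
  have hf : ContDiff ℝ 1 f := f.smooth 1
  let c : ℕ → ℝ := fun n => ((n : ℝ) + 1)⁻¹
  have hc0 : ∀ n, 0 < c n := fun n => by positivity
  have hc1 : ∀ n, c n ≤ 1 := fun n => inv_le_one_of_one_le₀ (by simp)
  let u : ℕ → EuclideanSpace ℝ (Fin N) → ℂ := fun n x => χ (c n • x) • f x
  have hχn : ∀ n, ContDiff ℝ 1 fun x => χ (c n • x) := fun n =>
    hχ.comp (contDiff_const_smul (c n))
  have hu : ∀ n, ContDiff ℝ 1 (u n) := fun n => (hχn n).smul hf
  have hsupp : ∀ n, HasCompactSupport (u n) := fun n =>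
    HasCompactSupport.smul_right (χ.hasCompactSupport.comp_smul (hc0 n).ne')
  have hder : ∀ n x, ‖fderiv ℝ (u n) x‖ ≤ ‖fderiv ℝ f x‖ + K * ‖f x‖ := by
    intro n x
    have h1 : HasFDerivAt (fun x => χ (c n • x))
        ((fderiv ℝ χ (c n • x)).comp (c n • ContinuousLinearMap.id ℝ _)) x :=
      ((hχ.differentiable one_ne_zero) _).hasFDerivAt.comp x
        ((hasFDerivAt_id x).const_smul (c n))
    have h2 := h1.smul (f.hasFDerivAt x)
    rw [show u n = (fun x => χ (c n • x)) • ⇑f from rfl, h2.fderiv]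
    refine (norm_add_le _ _).trans (add_le_add ?_ ?_)
    · rw [norm_smul, Real.norm_of_nonneg χ.nonneg]
      exact mul_le_of_le_one_left (norm_nonneg _) χ.le_one
    · rw [ContinuousLinearMap.norm_smulRight_apply]
      gcongr
      rw [ContinuousLinearMap.comp_smul, ContinuousLinearMap.comp_id, norm_smul,
        Real.norm_of_nonneg (hc0 n).le]
      exact (mul_le_of_le_one_left (norm_nonneg _) (hc1 n)).trans (hK _)
  have hbound : ∀ n, eLpNorm (u n) s volume ≤
      (C₀ * (1 + K.toNNReal) : NNReal) *
        (eLpNorm f 2 volume + eLpNorm (fderiv ℝ f) 2 volume) := by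
    intro n
    have hdim : Module.finrank ℝ (EuclideanSpace ℝ (Fin N)) = N := by simp
    have h1 := eLpNorm_le_eLpNorm_fderiv_of_eq
      (volume : Measure (EuclideanSpace ℝ (Fin N))) (hu n) (hsupp n) (p := 2) (p' := s)
      one_le_two (by rw [hdim]; omega) (by rw [hdim]; simpa using hs)
    have h2 : eLpNorm (fderiv ℝ (u n)) 2 volume ≤
        eLpNorm (fderiv ℝ f) 2 volume + K.toNNReal * eLpNorm f 2 volume := by
      calc eLpNorm (fderiv ℝ (u n)) 2 volume
          ≤ eLpNorm ((fun x => ‖fderiv ℝ f x‖) + (K • fun x => ‖f x‖)) 2 volume :=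
            eLpNorm_mono_real fun x => by simpa using hder n x
        _ ≤ eLpNorm (fun x => ‖fderiv ℝ f x‖) 2 volume
            + eLpNorm (K • fun x => ‖f x‖) 2 volume :=
            eLpNorm_add_le (hf.continuous_fderiv one_ne_zero).norm.aestronglyMeasurable
              (f.continuous.norm.const_smul K).aestronglyMeasurable one_le_two
        _ = _ := by
            rw [eLpNorm_const_smul, eLpNorm_norm, eLpNorm_norm, Real.enorm_eq_ofReal hK0]
            rfl
    refine h1.trans ?_
    rw [ENNReal.coe_mul, mul_assoc]
    refine mul_le_mul_right ?_ _
    refine h2.trans ?_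
    push_cast
    rw [mul_add, add_comm]
    refine add_le_add ?_ ?_
    · gcongr
      exact le_add_self
    · exact le_mul_of_one_le_left' le_self_add
  refine Lp.eLpNorm_le_of_ae_tendsto (u := Filter.atTop) (Filter.Eventually.of_forall hbound)
    (fun n => (hu n).continuous.aestronglyMeasurable) (ae_of_all _ fun x => ?_)
  have hc : Filter.Tendsto c Filter.atTop (nhds 0) := by
    simpa [c] using tendsto_one_div_add_atTop_nhds_zero_nat (𝕜 := ℝ)
  have hlim : Filter.Tendsto (fun n => c n • x) Filter.atTop (nhds 0) := by
    simpa using hc.smul_const x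
  refine tendsto_const_nhds.congr' ?_
  filter_upwards [hlim.eventually χ.eventuallyEq_one] with n hn
  simp [u, hn]

lemma schwartz_integrable_rpow {N : ℕ} (f : SchwartzMap (EuclideanSpace ℝ (Fin N)) ℂ)
    {r : ℝ} (hr : 0 < r) : Integrable fun x => ‖f x‖ ^ r := by
  have := (f.memLp (ENNReal.ofReal r) volume).integrable_norm_rpow (by simpa using hr)
    ENNReal.ofReal_ne_top
  simpa [ENNReal.toReal_ofReal hr.le] using this

/-- The `H¹` norm `‖f‖_{L²} + ‖∇f‖_{L²}`, the gradient being measured by the Euclidean norm of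
its coordinates. -/
noncomputable def H1norm {N : ℕ} (f : SchwartzMap (EuclideanSpace ℝ (Fin N)) ℂ) : ℝ :=
  (∫ x, ‖f x‖ ^ 2) ^ ((1:ℝ)/2)
    + (∫ x, ∑ i : Fin N, ‖fderiv ℝ (⇑f) x (EuclideanSpace.single i 1)‖ ^ 2) ^ ((1:ℝ)/2)

lemma H1norm_nonneg {N : ℕ} (f : SchwartzMap (EuclideanSpace ℝ (Fin N)) ℂ) : 0 ≤ H1norm f := by
  unfold H1norm
  positivity

lemma eLpNorm_add_le_H1norm {N : ℕ} (f : SchwartzMap (EuclideanSpace ℝ (Fin N)) ℂ) :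
    eLpNorm f 2 volume + eLpNorm (fderiv ℝ f) 2 volume ≤ ENNReal.ofReal (H1norm f) := by
  have hD : MemLp (fderiv ℝ f) 2 volume :=
    (SchwartzMap.fderivCLM ℝ (EuclideanSpace ℝ (Fin N)) ℂ f).memLp 2 volume
  rw [(f.memLp 2 volume).eLpNorm_eq_integral_rpow_norm two_ne_zero ENNReal.ofNat_ne_top,
    hD.eLpNorm_eq_integral_rpow_norm two_ne_zero ENNReal.ofNat_ne_top,
    ← ENNReal.ofReal_add (by positivity) (by positivity)]
  refine ENNReal.ofReal_le_ofReal ?_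
  unfold H1norm
  simp only [ENNReal.toReal_ofNat, Real.rpow_ofNat, one_div]
  gcongr
  · exact hD.integrable_norm_pow two_ne_zero
  · refine integrable_finsetSum _ fun i _ => ?_
    have hi : MemLp (fun x => fderiv ℝ f x (EuclideanSpace.single i (1 : ℝ))) 2 volume :=
      (SchwartzMap.evalCLM ℝ _ ℂ (EuclideanSpace.single i (1 : ℝ))
        (SchwartzMap.fderivCLM ℝ (EuclideanSpace ℝ (Fin N)) ℂ f)).memLp 2 volume
    exact hi.integrable_norm_pow two_ne_zero
  · exact fun x => opNorm_sq_le_sum _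

lemma integral_sq_le_H1norm {N : ℕ} (f : SchwartzMap (EuclideanSpace ℝ (Fin N)) ℂ) :
    ∫ x, ‖f x‖ ^ (2 : ℝ) ≤ H1norm f ^ (2 : ℝ) := by
  have h : (∫ x, ‖f x‖ ^ 2) ^ ((1:ℝ)/2) ≤ H1norm f :=
    le_add_of_nonneg_right (by positivity)
  have h0 : 0 ≤ ∫ x, ‖f x‖ ^ 2 := by positivity
  have := Real.rpow_le_rpow (by positivity) h (zero_le_two)
  rw [← Real.rpow_mul h0] at this
  norm_num at this ⊢
  exact this

/-- `H¹ ⊂ L^q` for `2 ≤ q ≤ 2N/(N-2)`. -/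
lemma integral_le_H1 (N : ℕ) (hN : 3 ≤ N) (q : ℝ) (hq : 2 ≤ q)
    (hqc : q ≤ 2 * (N:ℝ) / ((N:ℝ) - 2)) :
    ∃ C : ℝ, 0 < C ∧ ∀ f : SchwartzMap (EuclideanSpace ℝ (Fin N)) ℂ,
      ∫ x, ‖f x‖ ^ q ≤ C * H1norm f ^ q := by
  have hN' : (3 : ℝ) ≤ N := by exact_mod_cast hN
  set s : ℝ := 2 * (N:ℝ) / ((N:ℝ) - 2) with hs
  have hs0 : 0 < s := by linarith
  obtain ⟨C, hC⟩ := eLpNorm_le_H1 N hN s.toNNReal (by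
    rw [Real.coe_toNNReal _ hs0.le, hs]
    have : (N : ℝ) - 2 ≠ 0 := by linarith
    field_simp)
  have hcrit : ∀ f : SchwartzMap (EuclideanSpace ℝ (Fin N)) ℂ,
      ∫ x, ‖f x‖ ^ s ≤ (C : ℝ) ^ s * H1norm f ^ s := by
    intro f
    have h := (hC f).trans (mul_le_mul_right (eLpNorm_add_le_H1norm f) _)
    have hpos : (s.toNNReal : ENNReal) ≠ 0 := by simpa using hs0
    rw [(f.memLp _ volume).eLpNorm_eq_integral_rpow_norm hpos ENNReal.coe_ne_top,
      ← ENNReal.ofReal_coe_nnreal (p := C), ← ENNReal.ofReal_mul C.coe_nonneg,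
      ENNReal.ofReal_le_ofReal_iff (mul_nonneg C.coe_nonneg (H1norm_nonneg f)),
      ENNReal.coe_toReal, Real.coe_toNNReal _ hs0.le] at h
    have h0 : 0 ≤ ∫ x, ‖f x‖ ^ s := integral_nonneg fun x => by positivity
    have := Real.rpow_le_rpow (by positivity) h hs0.le
    rwa [← Real.rpow_mul h0, inv_mul_cancel₀ hs0.ne', Real.rpow_one,
      Real.mul_rpow C.coe_nonneg (H1norm_nonneg f)] at this
  refine ⟨1 + (C : ℝ) ^ s, by positivity, fun f => ?_⟩
  rcases (H1norm_nonneg f).eq_or_lt with hA | hA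
  · -- a vanishing `H¹` norm forces `f = 0` almost everywhere
    have h2 : ∫ x, ‖f x‖ ^ (2 : ℝ) = 0 := by
      refine le_antisymm ?_ (integral_nonneg fun x => by positivity)
      simpa [← hA] using integral_sq_le_H1norm f
    rw [integral_eq_zero_iff_of_nonneg (fun x => by positivity)
      (schwartz_integrable_rpow f two_pos)] at h2
    have : ∫ x, ‖f x‖ ^ q = 0 := by
      refine integral_eq_zero_of_ae ?_
      filter_upwards [h2] with x hx
      have : f x = 0 := by simpa using hx
      simp [this, Real.zero_rpow (by linarith : q ≠ 0)]
    rw [this]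
    have := H1norm_nonneg f
    positivity
  · set A := H1norm f
    have hpt : ∀ x, ‖f x‖ ^ q ≤ A ^ q * (‖f x‖ ^ (2 : ℝ) / A ^ (2 : ℝ) + ‖f x‖ ^ s / A ^ s) := by
      intro x
      have ht : 0 ≤ ‖f x‖ / A := by positivity
      have key : (‖f x‖ / A) ^ q ≤ (‖f x‖ / A) ^ (2 : ℝ) + (‖f x‖ / A) ^ s := by
        rcases le_total (‖f x‖ / A) 1 with h1 | h1
        · exact (Real.rpow_le_rpow_of_exponent_ge_of_imp ht h1 hq (by intros; linarith)).trans
            (le_add_of_nonneg_right (by positivity))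
        · exact (Real.rpow_le_rpow_of_exponent_le h1 hqc).trans
            (le_add_of_nonneg_left (by positivity))
      simp only [Real.div_rpow (norm_nonneg (f x)) hA.le] at key
      rwa [div_le_iff₀' (by positivity)] at key
    have i2 := (schwartz_integrable_rpow f two_pos).div_const (A ^ (2 : ℝ))
    have is := (schwartz_integrable_rpow f hs0).div_const (A ^ s)
    calc ∫ x, ‖f x‖ ^ q
        ≤ ∫ x, A ^ q * (‖f x‖ ^ (2 : ℝ) / A ^ (2 : ℝ) + ‖f x‖ ^ s / A ^ s) :=
          integral_mono (schwartz_integrable_rpow f (by linarith))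
            ((i2.add is).const_mul _) hpt
      _ = A ^ q * ((∫ x, ‖f x‖ ^ (2 : ℝ)) / A ^ (2 : ℝ) + (∫ x, ‖f x‖ ^ s) / A ^ s) := by
          rw [integral_const_mul, integral_add i2 is, integral_div, integral_div]
      _ ≤ A ^ q * (1 + (C : ℝ) ^ s) := by
          gcongr
          · exact div_le_one_of_le₀ (integral_sq_le_H1norm f) (by positivity)
          · rw [div_le_iff₀ (by positivity)]
            exact hcrit f
      _ = (1 + (C : ℝ) ^ s) * A ^ q := mul_comm _ _

/-- Exterior estimate: `∫_{|x|>R} |x|^{-b} |f|^{p+1} ≤ C R^{-b} (‖f‖_{L²}+‖∇f‖_{L²})^{p+1}`. -/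
theorem stmt2 (N : ℕ) (hN : 3 ≤ N) (b p : ℝ) (hb : 0 < b) (hp : 1 ≤ p)
    (hpc : p + 1 ≤ 2 * (N:ℝ) / ((N:ℝ) - 2)) :
    ∃ C : ℝ, 0 < C ∧ ∀ R : ℝ, 0 < R →
      ∀ f : SchwartzMap (EuclideanSpace ℝ (Fin N)) ℂ,
        (∫ x in {x : EuclideanSpace ℝ (Fin N) | R < ‖x‖}, ‖x‖ ^ (-b) * ‖f x‖ ^ (p + 1))
          ≤ C * R ^ (-b) *
            ((∫ x, ‖f x‖ ^ 2) ^ ((1:ℝ)/2)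
              + (∫ x, ∑ i : Fin N,
                  ‖fderiv ℝ (⇑f) x (EuclideanSpace.single i 1)‖ ^ 2) ^ ((1:ℝ)/2)) ^ (p + 1) := by
  obtain ⟨C, hC0, hC⟩ := integral_le_H1 N hN (p + 1) (by linarith) hpc
  refine ⟨C, hC0, fun R hR f => ?_⟩
  have hint : Integrable fun x => R ^ (-b) * ‖f x‖ ^ (p + 1) :=
    (schwartz_integrable_rpow f (by linarith)).const_mul _
  have hmeas : MeasurableSet {x : EuclideanSpace ℝ (Fin N) | R < ‖x‖} :=
    measurableSet_lt measurable_const measurable_norm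
  calc (∫ x in {x : EuclideanSpace ℝ (Fin N) | R < ‖x‖}, ‖x‖ ^ (-b) * ‖f x‖ ^ (p + 1))
      ≤ ∫ x in {x : EuclideanSpace ℝ (Fin N) | R < ‖x‖}, R ^ (-b) * ‖f x‖ ^ (p + 1) := by
        refine integral_mono_of_nonneg (ae_of_all _ fun x => by positivity) hint.integrableOn ?_
        filter_upwards [ae_restrict_mem hmeas] with x hx
        exact mul_le_mul_of_nonneg_right
          (Real.rpow_le_rpow_of_nonpos hR (le_of_lt hx) (by linarith)) (by positivity)
    _ ≤ ∫ x, R ^ (-b) * ‖f x‖ ^ (p + 1) :=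
        setIntegral_le_integral hint (ae_of_all _ fun x => by positivity)
    _ = R ^ (-b) * ∫ x, ‖f x‖ ^ (p + 1) := integral_const_mul _ _
    _ ≤ R ^ (-b) * (C * H1norm f ^ (p + 1)) := by
        gcongr
        exact hC f
    _ = _ := by
        rw [H1norm]
        ring
end
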